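/- arXiv:1809.00772 — 6 statements merged into one kernel-verified Lean document; each statement's English description precedes it below -/
import Mathlib

section
/- Let P be a dcpo. Every nonempty finite consistent subset F of P is ⋁-existing; that is, for every Scott continuous function f from P into an arbitrary dcpo-∨↑-semilattice L, the supremum of f(F) exists in L. -/
/-! A Scott continuous map `f` is monotone, so the image of the finite consistent set `F` is a
nonempty finite set bounded above by the image of any upper bound of `F`. Binary joins of
consistent pairs yield joins of nonempty finite bounded sets
(`IsDcpoVSemilattice.exists_isLUB_of_finite`), so the image of `F` has a supremum. -/

universe u v

/-- A *dcpo*: a partial order in which every nonempty directed subset has a least upper bound. -/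
def IsDcpo (P : Type*) [PartialOrder P] : Prop :=
  ∀ d : Set P, d.Nonempty → DirectedOn (· ≤ ·) d → ∃ a, IsLUB d a

/-- A *dcpo-∨↑-semilattice*: a dcpo in which every consistent pair of elements
(i.e. pair with an upper bound) has a least upper bound. -/
def IsDcpoVSemilattice (L : Type*) [PartialOrder L] : Prop :=
  IsDcpo L ∧ ∀ x y : L, BddAbove ({x, y} : Set L) → ∃ a, IsLUB ({x, y} : Set L) a

/-- Scott continuity: `f` maps least upper bounds of nonempty directed sets to
least upper bounds of the images. -/
def IsScottContinuous {P : Type*} {L : Type*} [PartialOrder P] [PartialOrder L]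
    (f : P → L) : Prop :=
  ∀ d : Set P, d.Nonempty → DirectedOn (· ≤ ·) d → ∀ a, IsLUB d a → IsLUB (f '' d) (f a)

/-- A *Scott closed* set: a lower set closed under least upper bounds of its
nonempty directed subsets. -/
def IsScottClosed {P : Type*} [PartialOrder P] (A : Set P) : Prop :=
  IsLowerSet A ∧ ∀ d : Set P, d ⊆ A → d.Nonempty → DirectedOn (· ≤ ·) d →
    ∀ a, IsLUB d a → a ∈ A

/-- The Scott closure of a set: the smallest Scott closed set containing it. -/
def scottClosure {P : Type*} [PartialOrder P] (A : Set P) : Set P :=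
  ⋂₀ {C | IsScottClosed C ∧ A ⊆ C}

/-- A subset `A` of a dcpo `P` is *⋁-existing* if for every Scott continuous map `f`
into an arbitrary dcpo-∨↑-semilattice `L`, the supremum of `f '' A` exists in `L`. -/
def SupExisting {P : Type u} [PartialOrder P] (A : Set P) : Prop :=
  ∀ (L : Type v) [PartialOrder L], IsDcpoVSemilattice L →
    ∀ f : P → L, IsScottContinuous f → ∃ a, IsLUB (f '' A) a

/-- An *F-Scott closed* set: a Scott closed set containing the least upper bound of
each of its nonempty finite consistent subsets. -/
def IsFScottClosed {L : Type*} [PartialOrder L] (A : Set L) : Prop :=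
  IsScottClosed A ∧ ∀ F : Set L, F ⊆ A → F.Nonempty → F.Finite → BddAbove F →
    ∀ a, IsLUB F a → a ∈ A

/-- The F-Scott closure of a set: the intersection of all F-Scott closed sets containing it. -/
def fScottClosure {L : Type*} [PartialOrder L] (A : Set L) : Set L :=
  ⋂₀ {C | IsFScottClosed C ∧ A ⊆ C}

/-- A *dcpo-∨↑-semilattice homomorphism*: maps least upper bounds of nonempty directed
sets and of consistent pairs to the least upper bounds of the images. -/
def IsSemilatticeHom {L : Type*} {M : Type*} [PartialOrder L] [PartialOrder M]
    (f : L → M) : Prop :=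
  (∀ d : Set L, d.Nonempty → DirectedOn (· ≤ ·) d → ∀ a, IsLUB d a → IsLUB (f '' d) (f a)) ∧
  (∀ x y : L, BddAbove ({x, y} : Set L) → ∀ a, IsLUB ({x, y} : Set L) a →
    IsLUB (f '' ({x, y} : Set L)) (f a))

/-- A subset `A` of a dcpo-∨↑-semilattice `L` is *F-⋁-existing* if for every
dcpo-∨↑-semilattice homomorphism `f` into an arbitrary dcpo-∨↑-semilattice `M`,
the supremum of `f '' A` exists in `M`. -/
def FSupExisting {L : Type u} [PartialOrder L] (A : Set L) : Prop :=
  ∀ (M : Type v) [PartialOrder M], IsDcpoVSemilattice M →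
    ∀ f : L → M, IsSemilatticeHom f → ∃ a, IsLUB (f '' A) a

/-- `P^∨`: the family of all ⋁-existing Scott closed subsets of `P`, ordered by inclusion. -/
abbrev Pvee (P : Type u) [PartialOrder P] : Type u :=
  {A : Set P // IsScottClosed A ∧ SupExisting.{u, u} A}

theorem isScottClosed_principal {P : Type u} [PartialOrder P] (x : P) :
    IsScottClosed (Set.Iic x) := by
  constructor
  · intro a b hba ha
    exact le_trans hba ha
  · intro d hd _ _ a ha
    exact ha.2 fun y hy => hd hy

theorem supExisting_principal {P : Type u} [PartialOrder P] (x : P) :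
    SupExisting.{u, v} (Set.Iic x) := by
  intro L _ _ f hf
  have hdir : DirectedOn (· ≤ ·) (Set.Iic x) := by
    intro a ha b hb
    exact ⟨x, le_refl x, ha, hb⟩
  exact ⟨f x, hf (Set.Iic x) ⟨x, Set.mem_Iic.2 (le_refl x)⟩ hdir x isLUB_Iic⟩

/-- The embedding `j` of `P` into `P^∨`, sending `x` to the principal ideal `↓x`. -/
def jmap {P : Type u} [PartialOrder P] (x : P) : Pvee P :=
  ⟨Set.Iic x, isScottClosed_principal x, supExisting_principal.{u, u} x⟩

/-- In a dcpo in which consistent pairs have joins, every nonempty finite bounded set has a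
join, by induction on the set. The join of the smaller set lies below the given bound, so it
is consistent with the newly inserted element. -/
theorem IsDcpoVSemilattice.exists_isLUB_of_finite {L : Type*} [PartialOrder L]
    (hL : IsDcpoVSemilattice L) {G : Set L} (hfin : G.Finite) (hne : G.Nonempty)
    (hbdd : BddAbove G) : ∃ a, IsLUB G a := by
  induction G, hfin using Set.Finite.induction_on with
  | empty => exact absurd hne Set.not_nonempty_empty
  | @insert x s _ _ ih =>
    rcases s.eq_empty_or_nonempty with rfl | hs
    · exact ⟨x, by simp⟩
    · obtain ⟨b, hb⟩ := ih hs (hbdd.mono (Set.subset_insert x s))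
      -- Since `b` is the join of `s`, the sets `insert x s` and `{x, b}` have the same upper bounds.
      have hub : upperBounds (insert x s) = upperBounds {x, b} := by
        rw [upperBounds_insert, upperBounds_insert, upperBounds_singleton, hb.upperBounds_eq]
      obtain ⟨a, ha⟩ := hL.2 x b (by rwa [BddAbove, ← hub])
      exact ⟨a, by rwa [IsLUB, hub]⟩

/-- A Scott continuous map is monotone: for `x ≤ y` the pair `{x, y}` is directed with
join `y`. -/
theorem IsScottContinuous.monotone {P L : Type*} [PartialOrder P] [PartialOrder L]
    {f : P → L} (hf : IsScottContinuous f) : Monotone f := by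
  intro x y hxy
  have hdir : DirectedOn (· ≤ ·) ({x, y} : Set P) := by
    intro a ha b hb
    exact ⟨y, by simp, by rcases ha with rfl | rfl <;> simp [hxy],
      by rcases hb with rfl | rfl <;> simp [hxy]⟩
  have hlub : IsLUB ({x, y} : Set P) y :=
    ⟨by simp [hxy], fun _ h => h (by simp)⟩
  exact (hf _ ⟨x, by simp⟩ hdir y hlub).1 ⟨x, by simp, rfl⟩

/-- In a dcpo `P`, every nonempty finite consistent subset `F` is ⋁-existing. -/
theorem finite_consistent_supExisting {P : Type u} [PartialOrder P] (hP : IsDcpo P)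
    (F : Set P) (hne : F.Nonempty) (hfin : F.Finite) (hcons : BddAbove F) :
    SupExisting.{u, v} F := by
  intro L _ hL f hf
  exact hL.exists_isLUB_of_finite (hfin.image f) (hne.image f) (hf.monotone.map_bddAbove hcons)
end

section
/- Let P be a dcpo and A ⊆ P. Then A is ⋁-existing if and only if its Scott closure cl(A) is ⋁-existing. -/
/-!
A Scott continuous map `f` sends `A` and `scottClosure A` to sets with the same upper bounds,
because `{x | f x ≤ u}` is Scott closed for every `u`
(`IsScottContinuous.upperBounds_image_scottClosure`). Hence one image has a least upper bound
exactly when the other does.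
-/

universe u v

/-- A Scott continuous map is monotone: for `x ≤ y` the pair `{x, y}` is directed with least
upper bound `y`. -/
theorem IsScottContinuous.monotone_map {P : Type*} {L : Type*} [PartialOrder P] [PartialOrder L]
    {f : P → L} (hf : IsScottContinuous f) : Monotone f := by
  intro x y hxy
  have hlub : IsLUB ({x, y} : Set P) y := by
    exact IsGreatest.isLUB
      ⟨by simp, by rintro z (rfl | rfl) <;> simp [hxy]⟩
  have hdir : DirectedOn (· ≤ ·) ({x, y} : Set P) := fun a ha b hb =>
    ⟨y, by simp, hlub.1 ha, hlub.1 hb⟩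
  exact (hf {x, y} ⟨x, by simp⟩ hdir y hlub).1 ⟨x, by simp, rfl⟩

/-- The preimage of a principal ideal under a Scott continuous map is Scott closed. -/
theorem IsScottContinuous.isScottClosed_preimage_Iic {P : Type*} {L : Type*} [PartialOrder P]
    [PartialOrder L] {f : P → L} (hf : IsScottContinuous f) (u : L) :
    IsScottClosed (f ⁻¹' Set.Iic u) := by
  refine ⟨fun a b hba ha => (hf.monotone_map hba).trans ha, fun d hd hne hdir a ha => ?_⟩
  exact (hf d hne hdir a ha).2 (by rintro _ ⟨x, hx, rfl⟩; exact hd hx)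

theorem subset_scottClosure {P : Type*} [PartialOrder P] (A : Set P) : A ⊆ scottClosure A :=
  Set.subset_sInter fun _ hC => hC.2

/-- The images of `A` and of its Scott closure have the same upper bounds: if `u` bounds
`f '' A`, then `f ⁻¹' Set.Iic u` is a Scott closed set containing `A`, hence containing
`scottClosure A`. -/
theorem IsScottContinuous.upperBounds_image_scottClosure {P : Type*} {L : Type*} [PartialOrder P]
    [PartialOrder L] {f : P → L} (hf : IsScottContinuous f) (A : Set P) :
    upperBounds (f '' scottClosure A) = upperBounds (f '' A) := by
  refine (upperBounds_mono_set (Set.image_mono (subset_scottClosure A))).antisymm ?_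
  rintro u hu _ ⟨x, hx, rfl⟩
  exact hx (f ⁻¹' Set.Iic u) ⟨hf.isScottClosed_preimage_Iic u, fun a ha => hu ⟨a, ha, rfl⟩⟩

/-- In a dcpo `P`, a subset `A` is ⋁-existing iff its Scott closure is. -/
theorem supExisting_iff_scottClosure {P : Type u} [PartialOrder P] (hP : IsDcpo P)
    (A : Set P) :
    SupExisting.{u, v} A ↔ SupExisting.{u, v} (scottClosure A) := by
  have key (L : Type v) [PartialOrder L] (f : P → L) (hf : IsScottContinuous f) (a : L) :
      IsLUB (f '' scottClosure A) a ↔ IsLUB (f '' A) a := by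
    rw [IsLUB, IsLUB, hf.upperBounds_image_scottClosure]
  constructor
  · intro h L _ hL f hf
    obtain ⟨a, ha⟩ := h L hL f hf
    exact ⟨a, (key L f hf a).2 ha⟩
  · intro h L _ hL f hf
    obtain ⟨a, ha⟩ := h L hL f hf
    exact ⟨a, (key L f hf a).1 ha⟩
end

section
/- Let L and M be dcpo-∨↑-semilattices and let f : L → M be a function such that the preimage under f of every F-Scott closed subset of M is an F-Scott closed subset of L. Then f is a dcpo-∨↑-semilattice homomorphism: for every nonempty directed subset D of L, f(sup D) is the supremum of f(D), and for every consistent pair x, y in L, f(x ∨ y) is the supremum of {f(x), f(y)}. -/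
/-!
Principal ideals `↓b` of `M` are F-Scott closed, so each `f ⁻¹' ↓b` is an F-Scott closed
subset of `L`. That these preimages are lower sets makes `f` monotone, so `f a` bounds `f '' S`
whenever `a` is the supremum of `S`. If `b` is another upper bound of `f '' S`, then
`S ⊆ f ⁻¹' ↓b`; when `S` is directed or a consistent pair, closure of `f ⁻¹' ↓b` under the
supremum of `S` gives `f a ≤ b`.
-/

universe u v

theorem isFScottClosed_principal {P : Type u} [PartialOrder P] (b : P) :
    IsFScottClosed (Set.Iic b) :=
  ⟨isScottClosed_principal b, fun _ hF _ _ _ _ ha => ha.2 fun _ hy => hF hy⟩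

/-- If preimages under `f` of F-Scott closed sets are F-Scott closed, then `f`
is a dcpo-∨↑-semilattice homomorphism. -/
theorem fScottContinuous_isHom {L : Type u} {M : Type v} [PartialOrder L] [PartialOrder M]
    (hL : IsDcpoVSemilattice L) (hM : IsDcpoVSemilattice M) (f : L → M)
    (hf : ∀ A : Set M, IsFScottClosed A → IsFScottClosed (f ⁻¹' A)) :
    IsSemilatticeHom f := by
  have hmono : Monotone f := fun x y hxy =>
    (hf _ (isFScottClosed_principal (f y))).1.1 hxy (le_refl (f y))
  refine ⟨fun d hne hdir a ha => ⟨hmono.mem_upperBounds_image ha.1, fun b hb => ?_⟩,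
    fun x y hbdd a ha => ⟨hmono.mem_upperBounds_image ha.1, fun b hb => ?_⟩⟩
  · exact (hf _ (isFScottClosed_principal b)).1.2 d
      (fun z hz => hb (Set.mem_image_of_mem f hz)) hne hdir a ha
  · exact (hf _ (isFScottClosed_principal b)).2 {x, y}
      (fun z hz => hb (Set.mem_image_of_mem f hz)) (Set.insert_nonempty x {y})
      (Set.toFinite _) hbdd a ha
end

section
/- Let L be a dcpo-∨↑-semilattice and let A ⊆ L be nonempty and consistent. Then A has a supremum in L and the F-Scott closure of A equals the principal ideal ↓(sup A) = {x ∈ L : x ≤ sup A}. -/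
/-!
The F-Scott closure `C` of `A` is F-Scott closed and contains `A`. Every principal ideal is F-Scott
closed, so each upper bound of `A` is an upper bound of `C`. As `A` has an upper bound, any two
elements of `C` are consistent and their join lies in `C`; hence `C` is directed, its supremum `a`
exists, and `a ∈ C` by Scott closedness. Being a lower set with greatest element `a`, `C` is `Iic a`,
and `a` is the supremum of `A` because `A` and `C` have the same upper bounds.
-/

universe u v

theorem isFScottClosed_Iic {L : Type u} [PartialOrder L] (x : L) :
    IsFScottClosed (Set.Iic x) :=
  ⟨isScottClosed_principal x, fun _ hF _ _ _ _ ha => ha.2 fun _ hy => hF hy⟩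

theorem subset_fScottClosure {L : Type u} [PartialOrder L] (A : Set L) :
    A ⊆ fScottClosure A :=
  fun _ hx _ hC => hC.2 hx

theorem isFScottClosed_fScottClosure {L : Type u} [PartialOrder L] (A : Set L) :
    IsFScottClosed (fScottClosure A) := by
  refine ⟨⟨fun x y hyx hx C hC => hC.1.1.1 hyx (hx C hC), ?_⟩, ?_⟩
  · intro d hd hne hdir a ha C hC
    exact hC.1.1.2 d (fun y hy => hd hy C hC) hne hdir a ha
  · intro F hF hne hfin hbdd a ha C hC
    exact hC.1.2 F (fun y hy => hF hy C hC) hne hfin hbdd a ha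

theorem fScottClosure_subset_Iic {L : Type u} [PartialOrder L] {A : Set L} {b : L}
    (hb : b ∈ upperBounds A) : fScottClosure A ⊆ Set.Iic b :=
  fun _ hx => hx (Set.Iic b) ⟨isFScottClosed_Iic b, fun _ hy => hb hy⟩

/-- In a dcpo-∨↑-semilattice, a nonempty consistent subset `A` has a supremum and
its F-Scott closure is the principal ideal of that supremum. -/
theorem fScottClosure_consistent {L : Type u} [PartialOrder L] (hL : IsDcpoVSemilattice L)
    (A : Set L) (hne : A.Nonempty) (hcons : BddAbove A) :
    ∃ a, IsLUB A a ∧ fScottClosure A = Set.Iic a := by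
  obtain ⟨b, hb⟩ := hcons
  have hC := isFScottClosed_fScottClosure A
  have hAC := subset_fScottClosure A
  have hdir : DirectedOn (· ≤ ·) (fScottClosure A) := by
    intro x hx y hy
    have hbdd : BddAbove ({x, y} : Set L) := by
      refine ⟨b, ?_⟩
      rintro z (rfl | rfl)
      · exact fScottClosure_subset_Iic hb hx
      · exact fScottClosure_subset_Iic hb hy
    obtain ⟨s, hs⟩ := hL.2 x y hbdd
    exact ⟨s, hC.2 {x, y} (Set.pair_subset hx hy) (Set.insert_nonempty x {y})
      (Set.toFinite _) hbdd s hs, hs.1 (by simp), hs.1 (by simp)⟩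
  have hCne := hne.mono hAC
  obtain ⟨a, ha⟩ := hL.1 _ hCne hdir
  have haC : a ∈ fScottClosure A := hC.1.2 _ subset_rfl hCne hdir a ha
  refine ⟨a, ⟨fun x hx => ha.1 (hAC hx), fun c hc => fScottClosure_subset_Iic hc haC⟩, ?_⟩
  exact Set.Subset.antisymm (fun x hx => ha.1 hx) fun x hx => hC.1.1 hx haC
end

section
/- Let L be a dcpo-∨↑-semilattice. If a subset A of L is both F-Scott closed and F-⋁-existing, then A is a principal ideal: there exists a ∈ L with A = ↓a = {x ∈ L : x ≤ a} (namely a = sup A, which exists and belongs to A). -/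
/-!
Applying the hypothesis to the identity of `L` gives `a = sup A`; the content is that `a ∈ A`.
Glue two copies of `L` along the lower set `A`, obtaining the poset `Doubling A` in which the
points of `A` occur once and the points outside `A` occur twice, with elements outside `A`
comparable only inside the same copy. Since `A` is closed under directed suprema and suprema of
consistent pairs, `Doubling A` is again a dcpo-∨↑-semilattice and the inclusion of the first copy
of `L` is a homomorphism. Hence the image of `A` has a supremum `m` in `Doubling A`. It is below
both copies of `a`; if `a` were not in `A`, then `m` would have to come from `A`, and would then
be an upper bound of `A` in `A`, forcing `m = a ∈ A`.
-/

universe u v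

/-- Two copies of `L` glued along the lower set `A`: pairs `(x, i)` with tag `i : Bool`,
where the points of `A` carry only the tag `false`. -/
def Doubling {L : Type u} [PartialOrder L] (A : LowerSet L) : Type u :=
  {p : L × Bool // p.1 ∈ A → p.2 = false}

namespace Doubling

variable {L : Type u} [PartialOrder L] {A : LowerSet L}

/-- The order of `L`, except that a point outside `A` is only below points with the same tag. -/
instance : PartialOrder (Doubling A) where
  le p q := p.1.1 ≤ q.1.1 ∧ (p.1.1 ∈ A ∨ p.1.2 = q.1.2)
  le_refl p := ⟨le_rfl, Or.inr rfl⟩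
  le_trans p q r hpq hqr := by
    refine ⟨hpq.1.trans hqr.1, ?_⟩
    rcases hpq.2 with h | h
    · exact Or.inl h
    · rcases hqr.2 with h' | h'
      · exact Or.inl (A.lower hpq.1 h')
      · exact Or.inr (h.trans h')
  le_antisymm p q hpq hqp := by
    have h1 : p.1.1 = q.1.1 := le_antisymm hpq.1 hqp.1
    refine Subtype.ext (Prod.ext h1 ?_)
    rcases hpq.2 with h | h
    · rw [p.2 h, q.2 (h1 ▸ h)]
    · exact h

theorem le_def {p q : Doubling A} :
    p ≤ q ↔ p.1.1 ≤ q.1.1 ∧ (p.1.1 ∈ A ∨ p.1.2 = q.1.2) := Iff.rfl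

/-- An upper bound lying over a supremum in `L` is a supremum in `Doubling A`, as soon as
either it lies over `A` or the set has a member outside `A`, which then fixes the tag of every
upper bound. -/
theorem isLUB_of_fst {S : Set (Doubling A)} {m : Doubling A}
    (hs : IsLUB ((fun p : Doubling A => p.1.1) '' S) m.1.1) (hm : m ∈ upperBounds S)
    (h : m.1.1 ∈ A ∨ ∃ p ∈ S, p.1.1 ∉ A) : IsLUB S m := by
  refine ⟨hm, fun q hq => ⟨hs.2 ?_, ?_⟩⟩
  · rintro _ ⟨p, hp, rfl⟩
    exact (hq hp).1
  · rcases h with h | ⟨p, hp, hpA⟩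
    · exact Or.inl h
    · exact Or.inr (((hm hp).2.resolve_left hpA).symm.trans ((hq hp).2.resolve_left hpA))

/-- A set of pairwise consistent elements has a supremum in `Doubling A` if its projection has
one in `L`, provided `A` is closed under that supremum. -/
theorem exists_isLUB {S : Set (Doubling A)} {s : L}
    (hs : IsLUB ((fun p : Doubling A => p.1.1) '' S) s)
    (hcl : (fun p : Doubling A => p.1.1) '' S ⊆ A → s ∈ A)
    (hcons : ∀ p ∈ S, ∀ q ∈ S, ∃ r : Doubling A, p ≤ r ∧ q ≤ r) : ∃ m, IsLUB S m := by
  by_cases h : (fun p : Doubling A => p.1.1) '' S ⊆ A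
  · exact ⟨⟨(s, false), fun _ => rfl⟩, isLUB_of_fst hs
      (fun p hp => ⟨hs.1 ⟨p, hp, rfl⟩, Or.inl (h ⟨p, hp, rfl⟩)⟩) (Or.inl (hcl h))⟩
  · obtain ⟨_, ⟨p, hp, rfl⟩, hpA⟩ := Set.not_subset.1 h
    have hsA : s ∉ A := fun hsA => hpA (A.lower (hs.1 ⟨p, hp, rfl⟩) hsA)
    refine ⟨⟨(s, p.1.2), fun h => (hsA h).elim⟩, isLUB_of_fst hs (fun q hq => ?_)
      (Or.inr ⟨p, hp, hpA⟩)⟩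
    obtain ⟨r, hpr, hqr⟩ := hcons p hp q hq
    exact ⟨hs.1 ⟨q, hq, rfl⟩, hqr.2.imp_right fun e => e.trans (hpr.2.resolve_left hpA).symm⟩

/-- The inclusion of the copy of `L` with tag `false`. -/
def incl (A : LowerSet L) (x : L) : Doubling A := ⟨(x, false), fun _ => rfl⟩

theorem isLUB_incl {T : Set L} {s : L} (hs : IsLUB T s) (hcl : T ⊆ A → s ∈ A) :
    IsLUB (incl A '' T) (incl A s) := by
  refine isLUB_of_fst ?_ ?_ ?_
  · rw [Set.image_image]
    simpa [incl] using hs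
  · rintro _ ⟨x, hx, rfl⟩
    exact ⟨hs.1 hx, Or.inr rfl⟩
  · by_cases h : T ⊆ A
    · exact Or.inl (hcl h)
    · obtain ⟨x, hx, hxA⟩ := Set.not_subset.1 h
      exact Or.inr ⟨_, ⟨x, hx, rfl⟩, hxA⟩

theorem pair_closed (hA : IsFScottClosed (A : Set L)) {x y s : L} (hs : IsLUB {x, y} s)
    (h : ({x, y} : Set L) ⊆ A) : s ∈ A :=
  hA.2 _ h (Set.insert_nonempty _ _) (Set.toFinite _) ⟨s, hs.1⟩ _ hs

theorem isDcpoVSemilattice (hL : IsDcpoVSemilattice L) (hA : IsFScottClosed (A : Set L)) :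
    IsDcpoVSemilattice (Doubling A) := by
  constructor
  · intro d hne hd
    have hd' : DirectedOn (· ≤ ·) ((fun p : Doubling A => p.1.1) '' d) := by
      rintro _ ⟨p, hp, rfl⟩ _ ⟨q, hq, rfl⟩
      obtain ⟨r, hr, hpr, hqr⟩ := hd p hp q hq
      exact ⟨_, ⟨r, hr, rfl⟩, hpr.1, hqr.1⟩
    obtain ⟨s, hs⟩ := hL.1 _ (hne.image _) hd'
    refine exists_isLUB hs (fun h => hA.1.2 _ h (hne.image _) hd' s hs) fun p hp q hq => ?_
    obtain ⟨r, -, hpr, hqr⟩ := hd p hp q hq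
    exact ⟨r, hpr, hqr⟩
  · rintro p q ⟨b, hb⟩
    have himg : (fun p : Doubling A => p.1.1) '' {p, q} = {p.1.1, q.1.1} := Set.image_pair _ _ _
    obtain ⟨s, hs⟩ := hL.2 p.1.1 q.1.1 ⟨b.1.1, by
      rw [← himg]
      rintro _ ⟨r, hr, rfl⟩
      exact (hb hr).1⟩
    refine exists_isLUB (himg ▸ hs) (fun h => pair_closed hA hs (himg ▸ h)) ?_
    exact fun r hr t ht => ⟨b, hb hr, hb ht⟩

theorem isSemilatticeHom_incl (hA : IsFScottClosed (A : Set L)) :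
    IsSemilatticeHom (incl A) :=
  ⟨fun d hne hd a ha => isLUB_incl ha fun h => hA.1.2 d h hne hd a ha,
    fun _ _ _ _ ha => isLUB_incl ha (pair_closed hA ha)⟩

end Doubling

/-- In a dcpo-∨↑-semilattice, a subset that is both F-Scott closed and
F-⋁-existing is a principal ideal `↓a` with `a = sup A ∈ A`. -/
theorem fScottClosed_fSupExisting_principal {L : Type u} [PartialOrder L]
    (hL : IsDcpoVSemilattice L) (A : Set L) (hA : IsFScottClosed A)
    (hA' : FSupExisting.{u, u} A) :
    ∃ a, IsLUB A a ∧ a ∈ A ∧ A = Set.Iic a := by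
  obtain ⟨a, ha⟩ : ∃ a, IsLUB A a := by
    have hid : IsSemilatticeHom (id : L → L) :=
      ⟨fun d _ _ a ha => by rwa [Set.image_id],
        fun x y _ a ha => by rwa [Set.image_id]⟩
    simpa using hA' L hL id hid
  have haA : a ∈ A := by
    by_contra haA
    let B : LowerSet L := ⟨A, hA.1.1⟩
    obtain ⟨m, hm⟩ := hA' (Doubling B) (Doubling.isDcpoVSemilattice (A := B) hL hA)
      (Doubling.incl B) (Doubling.isSemilatticeHom_incl (A := B) hA)
    -- Both copies of `a` bound the image of `A`, so `m` is below both.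
    have hle (i : Bool) : m ≤ (⟨(a, i), fun h => (haA h).elim⟩ : Doubling B) := by
      refine hm.2 ?_
      rintro _ ⟨x, hx, rfl⟩
      exact ⟨ha.1 hx, Or.inl hx⟩
    have hmA : m.1.1 ∈ A := by
      rcases (hle false).2 with h | h
      · exact h
      · rcases (hle true).2 with h' | h'
        · exact h'
        · exact absurd (h.symm.trans h') Bool.false_ne_true
    have ham : a ≤ m.1.1 := ha.2 fun x hx => (hm.1 ⟨x, hx, rfl⟩).1
    exact haA (hA.1.1 ham hmA)
  exact ⟨a, ha, haA, Set.Subset.antisymm (fun x hx => ha.1 hx) fun x hx => hA.1.1 hx haA⟩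
end

section
/- Let P be a dcpo and let 𝒜 ⊆ P^∨ be F-Scott closed in the poset P^∨ (a lower set containing the least upper bound in P^∨ of each of its nonempty directed subfamilies and of each of its nonempty finite subfamilies that are consistent in P^∨). Then the union ⋃{C : C ∈ 𝒜} is a Scott closed subset of P. -/
/-! A point `x` lies in `⋃ 𝒜` exactly when `↓x ∈ 𝒜`, as `𝒜` is a lower set; so `⋃ 𝒜` is the
preimage of `𝒜` under `jmap`. Since `jmap` preserves directed suprema (`isLUB_jmap_image`),
this preimage is closed under them. -/


universe u v

/-- A Scott closed set containing every element of a directed set contains its supremum `a`,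
so every upper bound of the principal ideals contains `↓a`. -/
theorem isLUB_jmap_image {P : Type u} [PartialOrder P] {d : Set P} (hne : d.Nonempty)
    (hdir : DirectedOn (· ≤ ·) d) {a : P} (ha : IsLUB d a) :
    IsLUB (jmap '' d) (jmap a) := by
  constructor
  · rintro _ ⟨x, hx, rfl⟩
    exact Set.Iic_subset_Iic.2 (ha.1 hx)
  · intro B hB
    have hdB : d ⊆ B.1 := fun x hx => hB ⟨x, hx, rfl⟩ (le_refl x)
    have haB : a ∈ B.1 := B.2.1.2 d hdB hne hdir a ha
    exact fun y hy => B.2.1.1 hy haB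

/-- If `𝒜 ⊆ P^∨` is F-Scott closed in the poset `P^∨`, then the union
`⋃ {C : C ∈ 𝒜}` is a Scott closed subset of `P`. -/
theorem union_of_fScottClosed {P : Type u} [PartialOrder P] (hP : IsDcpo P)
    (𝒜 : Set (Pvee P)) (h𝒜 : IsFScottClosed 𝒜) :
    IsScottClosed (⋃ C ∈ 𝒜, C.1) := by
  obtain ⟨⟨hlow, hsup⟩, -⟩ := h𝒜
  constructor
  · intro x y hyx hx
    obtain ⟨C, hC, hxC⟩ := Set.mem_iUnion₂.1 hx
    exact Set.mem_iUnion₂.2 ⟨C, hC, C.2.1.1 hyx hxC⟩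
  · intro d hd hne hdir a ha
    have hj : jmap '' d ⊆ 𝒜 := by
      rintro _ ⟨x, hx, rfl⟩
      obtain ⟨C, hC, hxC⟩ := Set.mem_iUnion₂.1 (hd hx)
      have hle : jmap x ≤ C := fun y hy => C.2.1.1 hy hxC
      exact hlow hle hC
    have hjdir : DirectedOn (· ≤ ·) (jmap '' d) := by
      rintro _ ⟨x, hx, rfl⟩ _ ⟨y, hy, rfl⟩
      obtain ⟨z, hz, hxz, hyz⟩ := hdir x hx y hy
      exact ⟨jmap z, ⟨z, hz, rfl⟩, Set.Iic_subset_Iic.2 hxz, Set.Iic_subset_Iic.2 hyz⟩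
    have hja : jmap a ∈ 𝒜 :=
      hsup _ hj (hne.image _) hjdir _ (isLUB_jmap_image hne hdir ha)
    exact Set.mem_iUnion₂.2 ⟨jmap a, hja, le_refl a⟩
end
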